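/- (Theorem 4, set characterization) Under the standing assumptions on the global optimization problem, assume the problem is solvable. Then a vector x̃ : Fin n → ℝ is a globally optimal solution if and only if (x̃_j : EReal) ≤ x*_j(A,b) for all j with k_j = 0 and (x̃_j : EReal) = x*_j(A,b) for all j with k_j > 0; i.e., the set of all globally optimal solutions equals S = {x̃ | x̃_j ≤ x*_j if k_j = 0 and x̃_j = x*_j if k_j > 0}. -/

import Mathlib

open scoped BigOperators

noncomputable section

/-- Max-plus product: `(A ⊗ x)_i = ⨆_j (A i j + x_j)` in `EReal`. -/
def maxPlus {m n : ℕ} (A : Matrix (Fin m) (Fin n) EReal) (x : Fin n → EReal)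
    (i : Fin m) : EReal :=
  ⨆ j, A i j + x j

/-- Auxiliary subtraction: `s(b,a) = +∞` if `a = -∞`, else `b - a`. -/
def sSub (b a : EReal) : EReal := if a = ⊥ then ⊤ else b - a

/-- Greatest subsolution `x*(A,b)_j = ⨅_i s(b_i, A i j)`. -/
def xstar {m n : ℕ} (A : Matrix (Fin m) (Fin n) EReal) (b : Fin m → EReal)
    (j : Fin n) : EReal :=
  ⨅ i, sSub (b i) (A i j)

/-- Objective function `F(x)_i = ⨆_j (A i j + x_j)` for real vectors `x`. -/
def objF {m n : ℕ} (A : Matrix (Fin m) (Fin n) EReal) (x : Fin n → ℝ)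
    (i : Fin m) : EReal :=
  ⨆ j, A i j + (x j : EReal)

/-- `J = {j | k_j > 0}` as a finite set. -/
def Jset {n : ℕ} (k : Fin n → ℝ) : Finset (Fin n) :=
  Finset.univ.filter (fun j => 0 < k j)

/-- Greatest lower bound `b_i = ((∑_{j ∈ J} k_j * A i j) + c) / (∑_{j ∈ J} k_j)`. -/
def glb {m n : ℕ} (A : Matrix (Fin m) (Fin n) EReal) (k : Fin n → ℝ) (c : ℝ)
    (i : Fin m) : EReal :=
  ((∑ j ∈ Jset k, (k j : EReal) * A i j) + (c : EReal)) /
    ((∑ j ∈ Jset k, k j : ℝ) : EReal)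

/-- `xt` is a globally optimal solution of the problem `(A, k, c)`. -/
def IsOptimal {m n : ℕ} (A : Matrix (Fin m) (Fin n) EReal) (k : Fin n → ℝ)
    (c : ℝ) (xt : Fin n → ℝ) : Prop :=
  (∑ j, k j * xt j = c) ∧
    ∀ x : Fin n → ℝ, (∑ j, k j * x j = c) → ∀ i, objF A xt i ≤ objF A x i

/-- Real version of `glb`. -/
def betaR {m n : ℕ} (A : Matrix (Fin m) (Fin n) EReal) (k : Fin n → ℝ) (c : ℝ)
    (i : Fin m) : ℝ :=
  ((∑ j, k j * (A i j).toReal) + c) / (∑ j, k j)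

lemma aux_sumJ {n : ℕ} (k : Fin n → ℝ) (hk : ∀ j, 0 ≤ k j) (f : Fin n → ℝ) :
    ∑ j ∈ Jset k, k j * f j = ∑ j, k j * f j := by
  unfold Jset
  rw [Finset.sum_filter]
  refine Finset.sum_congr rfl fun j _ => ?_
  split_ifs with h
  · rfl
  · have : k j = 0 := le_antisymm (not_lt.mp h) (hk j)
    simp [this]

lemma aux_Kpos {n : ℕ} (k : Fin n → ℝ) (hk : ∀ j, 0 ≤ k j) (hk0 : ∃ j, k j ≠ 0) :
    0 < ∑ j, k j := by
  obtain ⟨j, hj⟩ := hk0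
  exact Finset.sum_pos' (fun j _ => hk j) ⟨j, Finset.mem_univ j, lt_of_le_of_ne (hk j) (Ne.symm hj)⟩

lemma aux_sum_coe {ι : Type*} (s : Finset ι) (f : ι → ℝ) :
    ((∑ j ∈ s, f j : ℝ) : EReal) = ∑ j ∈ s, (f j : EReal) := by
  classical
  induction s using Finset.induction_on with
  | empty => simp
  | insert a s ha ih => rw [Finset.sum_insert ha, Finset.sum_insert ha, EReal.coe_add, ih]

lemma aux_glb {m n : ℕ} (A : Matrix (Fin m) (Fin n) EReal) (hA : ∀ i j, A i j ≠ ⊤)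
    (k : Fin n → ℝ) (hk : ∀ j, 0 ≤ k j) (c : ℝ) (i : Fin m)
    (hb : ∀ j, 0 < k j → A i j ≠ ⊥) : glb A k c i = (betaR A k c i : EReal) := by
  unfold glb betaR
  have h1 : ∑ j ∈ Jset k, (k j : EReal) * A i j
      = ((∑ j, k j * (A i j).toReal : ℝ) : EReal) := by
    rw [← aux_sumJ k hk, aux_sum_coe]
    refine Finset.sum_congr rfl fun j hj => ?_
    have hj' : 0 < k j := by simpa [Jset] using hj
    rw [EReal.coe_mul, EReal.coe_toReal (hA i j) (hb j hj')]
  have h2 : ∑ j ∈ Jset k, k j = ∑ j, k j := by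
    simpa using aux_sumJ k hk (fun _ => 1)
  rw [h1, h2, ← EReal.coe_add, EReal.coe_div]

lemma aux_beta_le {m n : ℕ} (A : Matrix (Fin m) (Fin n) EReal)
    (k : Fin n → ℝ) (hk : ∀ j, 0 ≤ k j) (hk0 : ∃ j, k j ≠ 0) (c : ℝ) (i : Fin m)
    (x : Fin n → ℝ) (hx : ∑ j, k j * x j = c) :
    ∑ j, k j * ((A i j).toReal + x j - betaR A k c i) = 0 := by
  have hK := aux_Kpos k hk hk0
  have : betaR A k c i * (∑ j, k j) = (∑ j, k j * (A i j).toReal) + c := by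
    unfold betaR; field_simp
  simp only [mul_sub, mul_add, Finset.sum_sub_distrib, Finset.sum_add_distrib, hx]
  rw [← Finset.sum_mul]
  linarith

lemma aux_lower {m n : ℕ} (A : Matrix (Fin m) (Fin n) EReal) (hA : ∀ i j, A i j ≠ ⊤)
    (k : Fin n → ℝ) (hk : ∀ j, 0 ≤ k j) (hk0 : ∃ j, k j ≠ 0) (c : ℝ) (i : Fin m)
    (hb : ∀ j, 0 < k j → A i j ≠ ⊥)
    (x : Fin n → ℝ) (hx : ∑ j, k j * x j = c) :
    (betaR A k c i : EReal) ≤ objF A x i := by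
  have h0 := aux_beta_le A k hk hk0 c i x hx
  obtain ⟨j, hj, hle⟩ : ∃ j, 0 < k j ∧ betaR A k c i ≤ (A i j).toReal + x j := by
    by_contra! hcon
    obtain ⟨j0, hj0⟩ := hk0
    have hj0' : 0 < k j0 := lt_of_le_of_ne (hk j0) (Ne.symm hj0)
    have : ∑ j, k j * ((A i j).toReal + x j - betaR A k c i) < ∑ j : Fin n, (0 : ℝ) := by
      apply Finset.sum_lt_sum
      · intro j _
        rcases (hk j).eq_or_lt with h | h
        · simp [← h]
        · have := hcon j h
          nlinarith
      · refine ⟨j0, Finset.mem_univ _, ?_⟩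
        have := hcon j0 hj0'
        nlinarith
    simp at this
    linarith
  have h1 : (betaR A k c i : EReal) ≤ A i j + (x j : EReal) := by
    rw [← EReal.coe_toReal (hA i j) (hb j hj), ← EReal.coe_add]
    exact_mod_cast hle
  exact h1.trans (le_iSup (fun j => A i j + (x j : EReal)) j)

lemma aux_opt_real {m n : ℕ} (A : Matrix (Fin m) (Fin n) EReal) (hA : ∀ i j, A i j ≠ ⊤)
    (k : Fin n → ℝ) (c : ℝ)
    (hrow : ∀ i, ∃ j, A i j ≠ ⊥) (xt : Fin n → ℝ) (h : IsOptimal A k c xt)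
    (i : Fin m) (j0 : Fin n) (hj0 : 0 < k j0) : A i j0 ≠ ⊥ := by
  intro hbot
  obtain ⟨hf, ho⟩ := h
  -- decrease everything by one except coordinate `j0`
  let t : ℝ := (∑ j, k j) / k j0
  let x : Fin n → ℝ := fun j => xt j - 1 + (if j = j0 then t else 0)
  have hx : ∑ j, k j * x j = c := by
    simp only [x, mul_add, mul_sub, Finset.sum_add_distrib, Finset.sum_sub_distrib, hf]
    simp [t]
    field_simp
    ring
  have hle := ho x hx i
  obtain ⟨j1, hj1⟩ := hrow i
  haveI : Nonempty (Fin n) := ⟨j0⟩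
  obtain ⟨j2, hj2⟩ := exists_eq_ciSup_of_finite (f := fun j => A i j + (x j : EReal))
  have hle2 : objF A xt i ≤ A i j2 + (x j2 : EReal) := by
    refine hle.trans ?_
    unfold objF
    rw [← hj2]
  have hA2 : A i j2 ≠ ⊥ := by
    intro hb
    rw [hb, EReal.bot_add] at hle2
    have h3 : A i j1 + (xt j1 : EReal) ≤ ⊥ :=
      (le_iSup (fun j => A i j + (xt j : EReal)) j1).trans hle2
    rw [← EReal.coe_toReal (hA i j1) hj1, ← EReal.coe_add] at h3
    exact EReal.coe_ne_bot _ (le_bot_iff.mp h3)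
  have hne : j2 ≠ j0 := fun e => hA2 (e ▸ hbot)
  have h3 : A i j2 + (xt j2 : EReal) ≤ A i j2 + (x j2 : EReal) :=
    (le_iSup (fun j => A i j + (xt j : EReal)) j2).trans hle2
  rw [← EReal.coe_toReal (hA i j2) hA2, ← EReal.coe_add, ← EReal.coe_add,
    EReal.coe_le_coe_iff] at h3
  simp [x, hne] at h3
  linarith

lemma aux_opt_le {m n : ℕ} (A : Matrix (Fin m) (Fin n) EReal) (hA : ∀ i j, A i j ≠ ⊤)
    (k : Fin n → ℝ) (hk : ∀ j, 0 ≤ k j) (hk0 : ∃ j, k j ≠ 0) (c : ℝ)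
    (xt : Fin n → ℝ) (h : IsOptimal A k c xt) (i : Fin m) (j : Fin n) (hb : A i j ≠ ⊥) :
    (A i j).toReal + xt j ≤ betaR A k c i := by
  have hK := aux_Kpos k hk hk0
  let x : Fin n → ℝ := fun j => betaR A k c i - (A i j).toReal
  have hx : ∑ j, k j * x j = c := by
    have : betaR A k c i * (∑ j, k j) = (∑ j, k j * (A i j).toReal) + c := by
      unfold betaR; field_simp
    simp only [x, mul_sub, Finset.sum_sub_distrib]
    rw [← Finset.sum_mul]
    linarith
  have h1 : objF A x i ≤ (betaR A k c i : EReal) := by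
    refine iSup_le fun l => ?_
    by_cases hl : A i l = ⊥
    · rw [hl, EReal.bot_add]; exact bot_le
    · rw [← EReal.coe_toReal (hA i l) hl, ← EReal.coe_add, EReal.coe_le_coe_iff]
      simp [x]
  have h2 : A i j + (xt j : EReal) ≤ (betaR A k c i : EReal) :=
    (le_iSup (fun j => A i j + (xt j : EReal)) j).trans ((h.2 x hx i).trans h1)
  rw [← EReal.coe_toReal (hA i j) hb, ← EReal.coe_add, EReal.coe_le_coe_iff] at h2
  exact h2

lemma aux_opt_eq {m n : ℕ} (A : Matrix (Fin m) (Fin n) EReal) (hA : ∀ i j, A i j ≠ ⊤)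
    (k : Fin n → ℝ) (hk : ∀ j, 0 ≤ k j) (hk0 : ∃ j, k j ≠ 0) (c : ℝ)
    (xt : Fin n → ℝ) (h : IsOptimal A k c xt) (i : Fin m)
    (hb : ∀ j, 0 < k j → A i j ≠ ⊥) (j : Fin n) (hj : 0 < k j) :
    (A i j).toReal + xt j = betaR A k c i := by
  have h0 := aux_beta_le A k hk hk0 c i xt h.1
  have h1 := (Finset.sum_eq_zero_iff_of_nonpos (fun l _ => by
    rcases (hk l).eq_or_lt with h' | h'
    · simp [← h']
    · have := aux_opt_le A hA k hk hk0 c xt h i l (hb l h')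
      nlinarith)).mp h0 j (Finset.mem_univ j)
  rcases mul_eq_zero.mp h1 with h2 | h2 <;> linarith

lemma aux_le_xstar {m n : ℕ} (A : Matrix (Fin m) (Fin n) EReal) (hA : ∀ i j, A i j ≠ ⊤)
    (β : Fin m → ℝ) (b : Fin m → EReal) (hbβ : ∀ i, b i = (β i : EReal)) (r : ℝ) (j : Fin n) :
    (r : EReal) ≤ xstar A b j ↔ ∀ i, A i j ≠ ⊥ → (A i j).toReal + r ≤ β i := by
  unfold xstar
  rw [le_iInf_iff]
  refine forall_congr' fun i => ?_
  by_cases hb : A i j = ⊥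
  · simp [sSub, hb]
  · have : sSub (b i) (A i j) = ((β i - (A i j).toReal : ℝ) : EReal) := by
      rw [sSub, if_neg hb, hbβ, EReal.coe_sub, EReal.coe_toReal (hA i j) hb]
    rw [this, EReal.coe_le_coe_iff]
    constructor
    · intro h _; linarith
    · intro h; linarith [h hb]

lemma aux_forward {m n : ℕ} (hm : 1 ≤ m)
    (A : Matrix (Fin m) (Fin n) EReal) (hA : ∀ i j, A i j ≠ ⊤)
    (k : Fin n → ℝ) (hk : ∀ j, 0 ≤ k j) (hk0 : ∃ j, k j ≠ 0) (c : ℝ)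
    (hrow : ∀ i, ∃ j, A i j ≠ ⊥) (xt : Fin n → ℝ) (h : IsOptimal A k c xt) :
      ((∀ j, k j = 0 → (xt j : EReal) ≤ xstar A (glb A k c) j) ∧
       (∀ j, 0 < k j → (xt j : EReal) = xstar A (glb A k c) j)) := by
  have hreal := aux_opt_real A hA k c hrow xt h
  have hg : ∀ i, glb A k c i = (betaR A k c i : EReal) :=
    fun i => aux_glb A hA k hk c i (hreal i)
  have hle : ∀ j, (xt j : EReal) ≤ xstar A (glb A k c) j := fun j =>
    (aux_le_xstar A hA _ _ hg _ j).mpr fun i hb => aux_opt_le A hA k hk hk0 c xt h i j hb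
  refine ⟨fun j _ => hle j, fun j hj => le_antisymm (hle j) ?_⟩
  let i : Fin m := ⟨0, hm⟩
  have hb := hreal i j hj
  refine (iInf_le _ i).trans ?_
  rw [sSub, if_neg hb, hg, ← aux_opt_eq A hA k hk hk0 c xt h i (hreal i) j hj,
    ← EReal.coe_toReal (hA i j) hb, ← EReal.coe_sub, EReal.coe_le_coe_iff]
  simp

theorem stmt_18 {m n : ℕ} (hm : 1 ≤ m) (hn : 1 ≤ n)
    (A : Matrix (Fin m) (Fin n) EReal) (hA : ∀ i j, A i j ≠ ⊤)
    (k : Fin n → ℝ) (hk : ∀ j, 0 ≤ k j) (hk0 : ∃ j, k j ≠ 0) (c : ℝ)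
    (hrow : ∀ i, ∃ j, A i j ≠ ⊥)
    (hcol : ∀ j, (∀ i, A i j = ⊥) → 0 < k j)
    (hsolv : ∃ xt : Fin n → ℝ, IsOptimal A k c xt) :
    ∀ xt : Fin n → ℝ, IsOptimal A k c xt ↔
      ((∀ j, k j = 0 → (xt j : EReal) ≤ xstar A (glb A k c) j) ∧
       (∀ j, 0 < k j → (xt j : EReal) = xstar A (glb A k c) j)) := by
  intro xt
  refine ⟨aux_forward hm A hA k hk hk0 c hrow xt, ?_⟩
  rintro ⟨h0, h1⟩
  obtain ⟨y, hy⟩ := hsolv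
  have hreal := aux_opt_real A hA k c hrow y hy
  have hg : ∀ i, glb A k c i = (betaR A k c i : EReal) :=
    fun i => aux_glb A hA k hk c i (hreal i)
  have hyf := (aux_forward hm A hA k hk hk0 c hrow y hy).2
  refine ⟨?_, fun x hx i => le_trans ?_ (aux_lower A hA k hk hk0 c i (hreal i) x hx)⟩
  · rw [← hy.1]
    refine Finset.sum_congr rfl fun j _ => ?_
    rcases (hk j).eq_or_lt with h | h
    · simp [← h]
    · have : (xt j : EReal) = (y j : EReal) := (h1 j h).trans (hyf j h).symm
      rw [EReal.coe_eq_coe_iff.mp this]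
  · refine iSup_le fun j => ?_
    by_cases hb : A i j = ⊥
    · rw [hb, EReal.bot_add]; exact bot_le
    · have hle : (xt j : EReal) ≤ xstar A (glb A k c) j := by
        rcases (hk j).eq_or_lt with h | h
        · exact h0 j h.symm
        · exact (h1 j h).le
      have := (aux_le_xstar A hA _ _ hg _ j).mp hle i hb
      rw [← EReal.coe_toReal (hA i j) hb, ← EReal.coe_add, EReal.coe_le_coe_iff]
      exact this
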